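/- The calculus KBeq is sound and complete with respect to the class of mid-threshold epistemic neighborhood models: for every formula φ of L_KB, KBeq ⊢ φ if and only if M,w ⊨ φ for every mid-threshold epistemic neighborhood model M and every world w of M. -/

import Mathlib

open Classical

/-- An epistemic neighborhood model. -/
structure ENM (W A : Type) where
  finite : Finite W
  nonempty : Nonempty W
  R : W → W → Prop
  equiv : Equivalence R
  V : W → Set A
  N : W → Set (Set W)
  kbc : ∀ w : W, ∀ X ∈ N w, X ⊆ {v | R w v}
  kbf : ∀ w : W, ∅ ∉ N w
  contains_class : ∀ w : W, {v | R w v} ∈ N w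
  agreeN : ∀ w v : W, R w v → N v = N w
  kbm : ∀ w : W, ∀ X ∈ N w, ∀ Y : Set W, X ⊆ Y → Y ⊆ {v | R w v} → Y ∈ N w

/-- The equivalence class `[w]` of a world. -/
def ENM.cl {W A : Type} (M : ENM W A) (w : W) : Set W := {v | M.R w v}

/-- A mid-threshold epistemic neighborhood model: an epistemic neighborhood model
additionally satisfying (d), (sc) and (scott). -/
structure MidENM (W A : Type) extends ENM W A where
  d : ∀ w : W, ∀ X ∈ N w, {v | R w v} \ X ∉ N w
  sc : ∀ w : W, ∀ X Y : Set W, X ⊆ {v | R w v} → Y ⊆ {v | R w v} →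
      {v | R w v} \ X ∉ N w → X ⊂ Y → Y ∈ N w
  scott : ∀ w : W, ∀ m : ℕ, ∀ X Y : Fin (m + 1) → Set W,
      (∀ i, X i ⊆ {v | R w v}) → (∀ i, Y i ⊆ {v | R w v}) →
      (∀ v : W, (Finset.univ.filter (fun i => v ∈ X i)).card ≤
                (Finset.univ.filter (fun i => v ∈ Y i)).card) →
      X 0 ∈ N w →
      (∀ i : Fin (m + 1), i ≠ 0 → {v | R w v} \ X i ∉ N w) →
      ∃ j : Fin (m + 1), Y j ∈ N w

/-- The language `L_KB`: `φ ::= ⊤ | p | ¬φ | φ∧φ | Kφ | Bφ`. -/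
inductive Form (A : Type) : Type where
  | top : Form A
  | atom : A → Form A
  | neg : Form A → Form A
  | and : Form A → Form A → Form A
  | K : Form A → Form A
  | B : Form A → Form A

namespace Form

/-- Material implication abbreviation. -/
def imp {A : Type} (φ ψ : Form A) : Form A := Form.neg (Form.and φ (Form.neg ψ))

/-- Disjunction abbreviation. -/
def or {A : Type} (φ ψ : Form A) : Form A := Form.neg (Form.and (Form.neg φ) (Form.neg ψ))

/-- Falsehood `⊥ := ¬⊤`. -/
def bot {A : Type} : Form A := Form.neg Form.top

/-- Biconditional abbreviation. -/
def iff {A : Type} (φ ψ : Form A) : Form A := Form.and (Form.imp φ ψ) (Form.imp ψ φ)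

end Form

/-- Truth set of a formula in an epistemic neighborhood model. -/
def nsem {W A : Type} (M : ENM W A) : Form A → Set W
  | Form.top => Set.univ
  | Form.atom p => {w | p ∈ M.V w}
  | Form.neg φ => (nsem M φ)ᶜ
  | Form.and φ ψ => nsem M φ ∩ nsem M ψ
  | Form.K φ => {w | M.cl w ⊆ nsem M φ}
  | Form.B φ => {w | M.cl w ∩ nsem M φ ∈ M.N w}

/-- Boolean evaluation of a formula under a valuation of "atomic" formulas
(propositional letters and formulas of the form `Kφ` or `Bφ`). -/
def evalb {A : Type} (v : Form A → Bool) : Form A → Bool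
  | Form.top => true
  | Form.atom p => v (Form.atom p)
  | Form.neg φ => !(evalb v φ)
  | Form.and φ ψ => evalb v φ && evalb v ψ
  | Form.K φ => v (Form.K φ)
  | Form.B φ => v (Form.B φ)

/-- `φ` is a propositional tautology (treating `Kψ` and `Bψ` as atoms). -/
def Taut {A : Type} (φ : Form A) : Prop := ∀ v : Form A → Bool, evalb v φ = true

/-- The Hilbert calculus `KB`. -/
inductive KB {A : Type} : Form A → Prop where
  | taut {φ : Form A} : Taut φ → KB φ
  | kdist (φ ψ : Form A) :
      KB (Form.imp (Form.K (Form.imp φ ψ)) (Form.imp (Form.K φ) (Form.K ψ)))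
  | kt (φ : Form A) : KB (Form.imp (Form.K φ) φ)
  | k4 (φ : Form A) : KB (Form.imp (Form.K φ) (Form.K (Form.K φ)))
  | k5 (φ : Form A) : KB (Form.imp (Form.neg (Form.K φ)) (Form.K (Form.neg (Form.K φ))))
  | bf : KB (Form.neg (Form.B (Form.bot)))
  | bn : KB (Form.B Form.top)
  | ap (φ : Form A) : KB (Form.imp (Form.B φ) (Form.K (Form.B φ)))
  | an (φ : Form A) : KB (Form.imp (Form.neg (Form.B φ)) (Form.K (Form.neg (Form.B φ))))
  | kbm (φ ψ : Form A) :
      KB (Form.imp (Form.K (Form.imp φ ψ)) (Form.imp (Form.B φ) (Form.B ψ)))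
  | mp {φ ψ : Form A} : KB (Form.imp φ ψ) → KB φ → KB ψ
  | nec {φ : Form A} : KB φ → KB (Form.K φ)

/-- Conjunction of a list of formulas. -/
def bigAnd {A : Type} : List (Form A) → Form A
  | [] => Form.top
  | φ :: l => Form.and φ (bigAnd l)

/-- Disjunction of a list of formulas. -/
def bigOr {A : Type} : List (Form A) → Form A
  | [] => Form.bot
  | φ :: l => Form.or φ (bigOr l)

/-- The conjunction `d_1φ_1∧…∧d_nφ_n∧e_1ψ_1∧…∧e_nψ_n` where `d_i` is the empty
string iff `i ∈ D` and `e_i` is the empty string iff `i ∈ E` (otherwise `¬`). -/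
def conjDE {A : Type} {n : ℕ} (φ ψ : Fin n → Form A) (D E : Finset (Fin n)) : Form A :=
  bigAnd (List.ofFn (fun i => if i ∈ D then φ i else Form.neg (φ i)) ++
          List.ofFn (fun i => if i ∈ E then ψ i else Form.neg (ψ i)))

/-- The formula `F_k`: the disjunction of all the conjunctions in which exactly
`k` of the `d_i` are the empty string and at least `k` of the `e_i` are. -/
noncomputable def segF {A : Type} {n : ℕ} (φ ψ : Fin n → Form A) (k : ℕ) : Form A :=
  bigOr ((((Finset.univ : Finset (Finset (Fin n) × Finset (Fin n))).filter
      (fun DE => DE.1.card = k ∧ k ≤ DE.2.card)).toList).map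
      (fun DE => conjDE φ ψ DE.1 DE.2))

/-- Segerberg's notation `(φ_1,…,φ_n 𝕀 ψ_1,…,ψ_n) := K(F_0 ∨ ⋯ ∨ F_n)`. -/
noncomputable def segI {A : Type} {n : ℕ} (φ ψ : Fin n → Form A) : Form A :=
  Form.K (bigOr ((List.range (n + 1)).map (segF φ ψ)))

/-- The Hilbert calculus `KBeq`, extending `KB` with (D), (SC) and (Scott). -/
inductive KBeq {A : Type} : Form A → Prop where
  | taut {φ : Form A} : Taut φ → KBeq φ
  | kdist (φ ψ : Form A) :
      KBeq (Form.imp (Form.K (Form.imp φ ψ)) (Form.imp (Form.K φ) (Form.K ψ)))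
  | kt (φ : Form A) : KBeq (Form.imp (Form.K φ) φ)
  | k4 (φ : Form A) : KBeq (Form.imp (Form.K φ) (Form.K (Form.K φ)))
  | k5 (φ : Form A) : KBeq (Form.imp (Form.neg (Form.K φ)) (Form.K (Form.neg (Form.K φ))))
  | bf : KBeq (Form.neg (Form.B (Form.bot)))
  | bn : KBeq (Form.B Form.top)
  | ap (φ : Form A) : KBeq (Form.imp (Form.B φ) (Form.K (Form.B φ)))
  | an (φ : Form A) : KBeq (Form.imp (Form.neg (Form.B φ)) (Form.K (Form.neg (Form.B φ))))
  | kbm (φ ψ : Form A) :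
      KBeq (Form.imp (Form.K (Form.imp φ ψ)) (Form.imp (Form.B φ) (Form.B ψ)))
  | dax (φ : Form A) : KBeq (Form.imp (Form.B φ) (Form.neg (Form.B (Form.neg φ))))
  | scax (φ ψ : Form A) :
      KBeq (Form.imp
        (Form.and (Form.neg (Form.B (Form.neg φ)))
          (Form.neg (Form.K (Form.neg (Form.and (Form.neg φ) ψ)))))
        (Form.B (Form.or φ ψ)))
  | scott (m : ℕ) (φ ψ : Fin (m + 1) → Form A) :
      KBeq (Form.imp
        (Form.and (segI φ ψ)
          (Form.and (Form.B (φ 0))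
            (bigAnd (List.ofFn (fun i : Fin m => Form.neg (Form.B (Form.neg (φ i.succ))))))))
        (bigOr (List.ofFn (fun i : Fin (m + 1) => Form.B (ψ i)))))
  | mp {φ ψ : Form A} : KBeq (Form.imp φ ψ) → KBeq φ → KBeq ψ
  | nec {φ : Form A} : KBeq φ → KBeq (Form.K φ)

/-!
Soundness is checked scheme by scheme. For completeness, extend the negation of an unprovable `φ` to
a maximal consistent set `Γ` and consider the maximal consistent sets containing the same formulas
`Kχ` as `Γ`. By (Ap) and (An) they also contain the same formulas `Bχ`, so a formula is decided
there by the atoms that occur in it, and identifying sets that agree on the finitely many atoms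
of `φ` changes no truth value. The resulting finite set of worlds forms a single equivalence class
all of whose subsets are definable, by disjunctive normal forms. Taking as neighborhoods the sets
defined by formulas believed in `Γ`, the conditions (d), (sc) and (scott) become instances of the
schemes (D), (SC) and (Scott).
-/

/-! ### Truth assignments -/

/-- A predicate on formulas that commutes with the Boolean connectives: the common shape of Boolean
evaluation, truth at a world, and membership in a maximal consistent set. -/
structure IsTruthAssignment {A : Type} (P : Form A → Prop) : Prop where
  top : P Form.top
  neg_iff (φ : Form A) : P φ.neg ↔ ¬ P φ
  and_iff (φ ψ : Form A) : P (φ.and ψ) ↔ P φ ∧ P ψ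

theorem isTruthAssignment_evalb {A : Type} (v : Form A → Bool) :
    IsTruthAssignment (fun φ => evalb v φ = true) := by
  constructor <;> simp [evalb]

namespace IsTruthAssignment

variable {A : Type} {P : Form A → Prop}

theorem not_bot (hP : IsTruthAssignment P) : ¬ P Form.bot :=
  fun h => (hP.neg_iff _).1 h hP.top

theorem imp_iff (hP : IsTruthAssignment P) (φ ψ : Form A) : P (φ.imp ψ) ↔ (P φ → P ψ) := by
  simp [Form.imp, hP.neg_iff, hP.and_iff]

theorem or_iff (hP : IsTruthAssignment P) (φ ψ : Form A) : P (φ.or ψ) ↔ P φ ∨ P ψ := by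
  simp [Form.or, hP.neg_iff, hP.and_iff, or_iff_not_imp_left]

theorem bigAnd_iff (hP : IsTruthAssignment P) (l : List (Form A)) :
    P (bigAnd l) ↔ ∀ φ ∈ l, P φ := by
  induction l with
  | nil => simp [bigAnd, hP.top]
  | cons φ l ih => simp [bigAnd, hP.and_iff, ih]

theorem bigOr_iff (hP : IsTruthAssignment P) (l : List (Form A)) :
    P (bigOr l) ↔ ∃ φ ∈ l, P φ := by
  induction l with
  | nil => simp [bigOr, hP.not_bot]
  | cons φ l ih => simp [bigOr, hP.or_iff, ih]

theorem bigAnd_ofFn_iff (hP : IsTruthAssignment P) {n : ℕ} (φ : Fin n → Form A) :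
    P (bigAnd (List.ofFn φ)) ↔ ∀ i, P (φ i) := by
  rw [hP.bigAnd_iff, List.forall_mem_ofFn_iff]

theorem bigOr_ofFn_iff (hP : IsTruthAssignment P) {n : ℕ} (φ : Fin n → Form A) :
    P (bigOr (List.ofFn φ)) ↔ ∃ i, P (φ i) := by
  simp [hP.bigOr_iff, List.mem_ofFn]

theorem bigOr_map_iff (hP : IsTruthAssignment P) {ι : Type*} (l : List ι) (φ : ι → Form A) :
    P (bigOr (l.map φ)) ↔ ∃ i ∈ l, P (φ i) := by
  simp [hP.bigOr_iff]

theorem ite_neg_iff (hP : IsTruthAssignment P) (p : Prop) [Decidable p] (φ : Form A) :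
    P (if p then φ else φ.neg) ↔ (p ↔ P φ) := by
  split_ifs with hp <;> simp [hp, hP.neg_iff]

theorem of_taut (hP : IsTruthAssignment P) {φ : Form A} (hφ : Taut φ) : P φ := by
  have evalb_decide : ∀ ψ : Form A, evalb (fun χ => decide (P χ)) ψ = true ↔ P ψ := by
    intro ψ
    induction ψ with
    | top => simp [evalb, hP.top]
    | atom p => simp [evalb]
    | neg ψ ih => simp [evalb, hP.neg_iff, ← ih]
    | and ψ χ ihψ ihχ => simp [evalb, hP.and_iff, ← ihψ, ← ihχ]
    | K ψ => simp [evalb]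
    | B ψ => simp [evalb]
  exact (evalb_decide φ).1 (hφ _)

theorem conjDE_iff (hP : IsTruthAssignment P) {n : ℕ} (φ ψ : Fin n → Form A)
    (D E : Finset (Fin n)) :
    P (conjDE φ ψ D E) ↔ D = ({i | P (φ i)} : Finset _) ∧ E = ({i | P (ψ i)} : Finset _) := by
  simp only [conjDE, hP.bigAnd_iff, List.mem_append, List.mem_ofFn, or_imp, forall_and,
    forall_exists_index, forall_apply_eq_imp_iff, hP.ite_neg_iff, Finset.ext_iff,
    Finset.mem_filter_univ]

theorem segF_iff (hP : IsTruthAssignment P) {n : ℕ} (φ ψ : Fin n → Form A) (k : ℕ) :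
    P (segF φ ψ k) ↔ ({i | P (φ i)} : Finset _).card = k ∧
      k ≤ ({i | P (ψ i)} : Finset _).card := by
  simp only [segF, hP.bigOr_map_iff, Finset.mem_toList, Finset.mem_filter_univ,
    hP.conjDE_iff, Prod.exists]
  constructor
  · rintro ⟨_, _, hcard, rfl, rfl⟩
    exact hcard
  · exact fun hcard => ⟨_, _, hcard, rfl, rfl⟩

theorem bigOr_segF_iff (hP : IsTruthAssignment P) {n : ℕ} (φ ψ : Fin n → Form A) :
    P (bigOr ((List.range (n + 1)).map (segF φ ψ))) ↔
      ({i | P (φ i)} : Finset _).card ≤ ({i | P (ψ i)} : Finset _).card := by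
  simp only [hP.bigOr_map_iff, List.mem_range, hP.segF_iff]
  constructor
  · rintro ⟨_, _, rfl, hle⟩
    exact hle
  · exact fun hle => ⟨_, Nat.lt_succ_of_le (card_finset_fin_le _), rfl, hle⟩

end IsTruthAssignment

/-! ### Soundness -/

namespace ENM

variable {W A : Type} (M : ENM W A)

theorem isTruthAssignment_mem_nsem (w : W) : IsTruthAssignment (fun φ => w ∈ nsem M φ) := by
  constructor <;> simp [nsem]

theorem nsem_bot : nsem M Form.bot = ∅ := by
  simp [Form.bot, nsem]

theorem mem_nsem_imp {w : W} {φ ψ : Form A} :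
    w ∈ nsem M (φ.imp ψ) ↔ (w ∈ nsem M φ → w ∈ nsem M ψ) :=
  (M.isTruthAssignment_mem_nsem w).imp_iff φ ψ

theorem mem_nsem_or {w : W} {φ ψ : Form A} :
    w ∈ nsem M (φ.or ψ) ↔ w ∈ nsem M φ ∨ w ∈ nsem M ψ :=
  (M.isTruthAssignment_mem_nsem w).or_iff φ ψ

theorem cl_eq_of_R {w v : W} (h : M.R w v) : M.cl v = M.cl w :=
  Set.ext fun _ => ⟨M.equiv.trans h, M.equiv.trans (M.equiv.symm h)⟩

theorem mem_nsem_K_congr {w v : W} (h : M.R w v) (φ : Form A) :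
    v ∈ nsem M φ.K ↔ w ∈ nsem M φ.K := by
  simp only [nsem, Set.mem_ofPred_eq, M.cl_eq_of_R h]

theorem mem_nsem_B_congr {w v : W} (h : M.R w v) (φ : Form A) :
    v ∈ nsem M φ.B ↔ w ∈ nsem M φ.B := by
  simp only [nsem, Set.mem_ofPred_eq, M.cl_eq_of_R h, M.agreeN w v h]

theorem cl_inter_nsem_neg (w : W) (φ : Form A) :
    M.cl w ∩ nsem M φ.neg = M.cl w \ (M.cl w ∩ nsem M φ) := by
  rw [Set.sdiff_self_inter]; rfl

theorem mem_nsem_B_neg {w : W} {φ : Form A} :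
    w ∈ nsem M φ.neg.B ↔ M.cl w \ (M.cl w ∩ nsem M φ) ∈ M.N w := by
  rw [← cl_inter_nsem_neg]; rfl

end ENM

namespace MidENM

variable {W A : Type} (M : MidENM W A)

theorem mem_nsem_scax (w : W) (φ ψ : Form A) :
    w ∈ nsem M.toENM
      (((φ.neg.B.neg).and (φ.neg.and ψ).neg.K.neg).imp (φ.or ψ).B) := by
  rw [M.mem_nsem_imp]
  rintro ⟨hB, hK⟩
  obtain ⟨v, hwv, hv⟩ := Set.not_subset.1 hK
  obtain ⟨hφ, hψ⟩ : v ∉ nsem M.toENM φ ∧ v ∈ nsem M.toENM ψ := by simpa [nsem] using hv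
  refine M.sc w _ _ Set.inter_subset_left Set.inter_subset_left
    (fun h => hB (M.mem_nsem_B_neg.2 h)) ((Set.ssubset_iff_of_subset ?_).2 ?_)
  · exact Set.inter_subset_inter_right _ fun u hu => M.mem_nsem_or.2 (Or.inl hu)
  · exact ⟨v, ⟨hwv, M.mem_nsem_or.2 (Or.inr hψ)⟩, fun h => hφ h.2⟩

theorem mem_nsem_scott (w : W) {m : ℕ} (φ ψ : Fin (m + 1) → Form A) :
    w ∈ nsem M.toENM
      (((segI φ ψ).and ((φ 0).B.and (bigAnd (List.ofFn fun i : Fin m => (φ i.succ).neg.B.neg)))).imp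
        (bigOr (List.ofFn fun i => (ψ i).B))) := by
  rw [M.mem_nsem_imp]
  rintro ⟨hseg, hB, hnotB⟩
  have hw := M.isTruthAssignment_mem_nsem w
  rw [hw.bigAnd_ofFn_iff] at hnotB
  rw [hw.bigOr_ofFn_iff]
  refine M.scott w m (fun i => M.cl w ∩ nsem M.toENM (φ i)) (fun i => M.cl w ∩ nsem M.toENM (ψ i))
    (fun _ => Set.inter_subset_left) (fun _ => Set.inter_subset_left) (fun v => ?_) hB
    (Fin.cases (absurd rfl) fun i _ h => hnotB i (M.mem_nsem_B_neg.2 h))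
  by_cases hv : v ∈ M.cl w
  · simpa [hv] using ((M.isTruthAssignment_mem_nsem v).bigOr_segF_iff φ ψ).1 (hseg hv)
  · simp [hv]

end MidENM

theorem KBeq.sound {W A : Type} {φ : Form A} (h : KBeq φ) (M : MidENM W A) (w : W) :
    w ∈ nsem M.toENM φ := by
  induction h generalizing w with
  | taut h => exact (M.isTruthAssignment_mem_nsem w).of_taut h
  | kdist φ ψ =>
    simp only [M.mem_nsem_imp]
    exact fun himp hφ v hv => M.mem_nsem_imp.1 (himp hv) (hφ hv)
  | kt φ => exact M.mem_nsem_imp.2 fun h => h (M.equiv.refl w)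
  | k4 φ => exact M.mem_nsem_imp.2 fun h _ hv => (M.mem_nsem_K_congr hv φ).2 h
  | k5 φ => exact M.mem_nsem_imp.2 fun h _ hv => mt (M.mem_nsem_K_congr hv φ).1 h
  | bf =>
    change M.cl w ∩ nsem M.toENM Form.bot ∉ M.N w
    rw [M.nsem_bot, Set.inter_empty]
    exact M.kbf w
  | bn =>
    change M.cl w ∩ Set.univ ∈ M.N w
    rw [Set.inter_univ]
    exact M.contains_class w
  | ap φ => exact M.mem_nsem_imp.2 fun h _ hv => (M.mem_nsem_B_congr hv φ).2 h
  | an φ => exact M.mem_nsem_imp.2 fun h _ hv => mt (M.mem_nsem_B_congr hv φ).1 h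
  | kbm φ ψ =>
    simp only [M.mem_nsem_imp]
    exact fun himp hB => M.kbm w _ hB _
      (fun v hv => ⟨hv.1, M.mem_nsem_imp.1 (himp hv.1) hv.2⟩) Set.inter_subset_left
  | dax φ => exact M.mem_nsem_imp.2 fun hB hBneg => M.d w _ hB (M.mem_nsem_B_neg.1 hBneg)
  | scax φ ψ => exact M.mem_nsem_scax w φ ψ
  | scott m φ ψ => exact M.mem_nsem_scott w φ ψ
  | mp _ _ ihimp ihφ => exact M.mem_nsem_imp.1 (ihimp w) (ihφ w)
  | nec _ ih => exact fun v _ => ih v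

/-! ### Maximal consistent sets -/

/-- Derivability in `KBeq` from a set of premises. Necessitation is available for theorems only,
which is what makes the deduction theorem hold. -/
inductive Derives {A : Type} (Γ : Set (Form A)) : Form A → Prop where
  | thm {φ : Form A} : KBeq φ → Derives Γ φ
  | hyp {φ : Form A} : φ ∈ Γ → Derives Γ φ
  | mp {φ ψ : Form A} : Derives Γ (φ.imp ψ) → Derives Γ φ → Derives Γ ψ

namespace Derives

variable {A : Type} {Γ Δ : Set (Form A)} {φ ψ χ : Form A}

theorem kbeq (h : Derives ∅ φ) : KBeq φ := by
  induction h with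
  | thm h => exact h
  | hyp h => exact h.elim
  | mp _ _ ihimp ihφ => exact ihimp.mp ihφ

theorem mono (hsub : Γ ⊆ Δ) (h : Derives Γ φ) : Derives Δ φ := by
  induction h with
  | thm h => exact thm h
  | hyp h => exact hyp (hsub h)
  | mp _ _ ihimp ihφ => exact ihimp.mp ihφ

theorem of_entails (hφ : Derives Γ φ) (h : ∀ P, IsTruthAssignment P → P φ → P ψ) : Derives Γ ψ :=
  mp (thm (KBeq.taut fun v => ((isTruthAssignment_evalb v).imp_iff φ ψ).2
    (h _ (isTruthAssignment_evalb v)))) hφ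

theorem of_entails₂ (hφ : Derives Γ φ) (hψ : Derives Γ ψ)
    (h : ∀ P, IsTruthAssignment P → P φ → P ψ → P χ) : Derives Γ χ :=
  mp (hφ.of_entails fun P hP hPφ => (hP.imp_iff ψ χ).2 (h P hP hPφ)) hψ

theorem deduction (h : Derives (insert φ Γ) ψ) : Derives Γ (φ.imp ψ) := by
  have weaken : ∀ {χ}, Derives Γ χ → Derives Γ (φ.imp χ) := fun hχ =>
    hχ.of_entails fun P hP hPχ => (hP.imp_iff _ _).2 fun _ => hPχ
  induction h with
  | thm h => exact weaken (thm h)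
  | hyp h =>
    rcases h with rfl | h
    · exact thm (KBeq.taut fun v => ((isTruthAssignment_evalb v).imp_iff _ _).2 id)
    · exact weaken (hyp h)
  | mp _ _ ihimp ihφ =>
    refine ihimp.of_entails₂ ihφ fun P hP => ?_
    simp only [hP.imp_iff]
    exact fun himp hφ h => himp h (hφ h)

theorem K_of_setOf_K_mem (h : Derives {χ | χ.K ∈ Γ} φ) : Derives Γ φ.K := by
  induction h with
  | thm h => exact thm h.nec
  | hyp h => exact hyp h
  | mp _ _ ihimp ihφ => exact ((thm (KBeq.kdist _ _)).mp ihimp).mp ihφ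

theorem exists_mem_of_sUnion {c : Set (Set (Form A))} (hne : c.Nonempty)
    (hdir : DirectedOn (· ⊆ ·) c) (h : Derives (⋃₀ c) φ) : ∃ Γ ∈ c, Derives Γ φ := by
  induction h with
  | thm h =>
    obtain ⟨Γ, hΓ⟩ := hne
    exact ⟨Γ, hΓ, thm h⟩
  | hyp h =>
    obtain ⟨Γ, hΓ, hmem⟩ := h
    exact ⟨Γ, hΓ, hyp hmem⟩
  | mp _ _ ihimp ihφ =>
    obtain ⟨Γ₁, hΓ₁, himp⟩ := ihimp
    obtain ⟨Γ₂, hΓ₂, hφ⟩ := ihφ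
    obtain ⟨Γ, hΓ, hsub₁, hsub₂⟩ := hdir Γ₁ hΓ₁ Γ₂ hΓ₂
    exact ⟨Γ, hΓ, (himp.mono hsub₁).mp (hφ.mono hsub₂)⟩

end Derives

/-- Consistency of a set of formulas: `⊥` is not derivable from it. -/
def Consistent {A : Type} (Γ : Set (Form A)) : Prop := ¬ Derives Γ Form.bot

/-- Maximality, with respect to inclusion, among the consistent sets of formulas. These sets are
the raw material for the worlds of the canonical model. -/
def MaximalConsistent {A : Type} (Γ : Set (Form A)) : Prop := Maximal Consistent Γ

section Lindenbaum

variable {A : Type} {Γ : Set (Form A)} {φ : Form A}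

theorem Consistent.insert (hΓ : Consistent Γ) (hφ : Derives Γ φ) : Consistent (insert φ Γ) :=
  fun h => hΓ (h.deduction.mp hφ)

theorem consistent_insert_neg (hφ : ¬ Derives Γ φ) : Consistent (insert φ.neg Γ) :=
  fun h => hφ (h.deduction.of_entails fun P hP => by
    simp [hP.imp_iff, hP.neg_iff, hP.not_bot])

theorem Consistent.exists_maximalConsistent (hΓ : Consistent Γ) :
    ∃ Δ, Γ ⊆ Δ ∧ MaximalConsistent Δ := by
  refine zorn_subset_nonempty {Δ | Consistent Δ} (fun c hc hchain hne => ?_) Γ hΓ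
  refine ⟨⋃₀ c, fun hbot => ?_, fun Δ hΔ => Set.subset_sUnion_of_mem hΔ⟩
  obtain ⟨Δ, hΔ, hbot⟩ := Derives.exists_mem_of_sUnion hne hchain.directedOn hbot
  exact hc hΔ hbot

end Lindenbaum

namespace MaximalConsistent

variable {A : Type} {Γ : Set (Form A)} {φ ψ : Form A}

theorem mem_of_consistent_insert (hΓ : MaximalConsistent Γ) (h : Consistent (insert φ Γ)) :
    φ ∈ Γ :=
  hΓ.2 h (Set.subset_insert φ Γ) (Set.mem_insert φ Γ)

theorem mem_iff_derives (hΓ : MaximalConsistent Γ) : φ ∈ Γ ↔ Derives Γ φ :=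
  ⟨Derives.hyp, fun h => hΓ.mem_of_consistent_insert (hΓ.1.insert h)⟩

theorem mem_of_kbeq (hΓ : MaximalConsistent Γ) (h : KBeq φ) : φ ∈ Γ :=
  hΓ.mem_iff_derives.2 (Derives.thm h)

theorem isTruthAssignment (hΓ : MaximalConsistent Γ) : IsTruthAssignment (· ∈ Γ) where
  top := hΓ.mem_of_kbeq (KBeq.taut fun _ => rfl)
  neg_iff φ := by
    constructor
    · exact fun hneg hφ => hΓ.1 ((Derives.hyp hneg).of_entails₂ (Derives.hyp hφ)
        fun P hP hPneg hPφ => ((hP.neg_iff φ).1 hPneg hPφ).elim)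
    · exact fun hφ => hΓ.mem_of_consistent_insert
        (consistent_insert_neg fun h => hφ (hΓ.mem_iff_derives.2 h))
  and_iff φ ψ := by
    simp only [hΓ.mem_iff_derives]
    constructor
    · exact fun h => ⟨h.of_entails fun P hP hand => ((hP.and_iff φ ψ).1 hand).1,
        h.of_entails fun P hP hand => ((hP.and_iff φ ψ).1 hand).2⟩
    · exact fun h => h.1.of_entails₂ h.2 fun P hP hPφ hPψ => (hP.and_iff φ ψ).2 ⟨hPφ, hPψ⟩

theorem mem_of_kbeq_imp (hΓ : MaximalConsistent Γ) (h : KBeq (φ.imp ψ)) (hφ : φ ∈ Γ) : ψ ∈ Γ :=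
  (hΓ.isTruthAssignment.imp_iff φ ψ).1 (hΓ.mem_of_kbeq h) hφ

end MaximalConsistent

theorem exists_maximalConsistent_notMem {A : Type} {Γ : Set (Form A)} {φ : Form A}
    (hφ : ¬ Derives Γ φ) : ∃ Δ, Γ ⊆ Δ ∧ MaximalConsistent Δ ∧ φ ∉ Δ := by
  obtain ⟨Δ, hsub, hΔ⟩ := (consistent_insert_neg hφ).exists_maximalConsistent
  exact ⟨Δ, (Set.subset_insert _ _).trans hsub, hΔ,
    (hΔ.isTruthAssignment.neg_iff φ).1 (hsub (Set.mem_insert _ _))⟩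

/-! ### Epistemic classes -/

/-- The equivalence class of `Γ` under the canonical accessibility relation for `K`: the maximal
consistent sets containing the same formulas `Kχ` as `Γ`. -/
def epistemicClass {A : Type} (Γ : Set (Form A)) : Set (Set (Form A)) :=
  {Δ | MaximalConsistent Δ ∧ ∀ χ : Form A, χ.K ∈ Δ ↔ χ.K ∈ Γ}

namespace MaximalConsistent

variable {A : Type} {Γ Δ : Set (Form A)} {φ ψ : Form A}

theorem self_mem_epistemicClass (hΓ : MaximalConsistent Γ) : Γ ∈ epistemicClass Γ :=
  ⟨hΓ, fun _ => Iff.rfl⟩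

theorem mem_epistemicClass_of_subset (hΓ : MaximalConsistent Γ) (hΔ : MaximalConsistent Δ)
    (hsub : {χ | χ.K ∈ Γ} ⊆ Δ) : Δ ∈ epistemicClass Γ := by
  refine ⟨hΔ, fun χ => ⟨fun hK => ?_, fun hK => hsub (hΓ.mem_of_kbeq_imp (KBeq.k4 χ) hK)⟩⟩
  by_contra hnK
  have hKnK : χ.K.neg.K ∈ Γ :=
    hΓ.mem_of_kbeq_imp (KBeq.k5 χ) ((hΓ.isTruthAssignment.neg_iff _).2 hnK)
  exact (hΔ.isTruthAssignment.neg_iff _).1 (hsub hKnK) hK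

theorem K_mem_iff (hΓ : MaximalConsistent Γ) : φ.K ∈ Γ ↔ ∀ Δ ∈ epistemicClass Γ, φ ∈ Δ := by
  refine ⟨fun hK Δ hΔ => hΔ.1.mem_of_kbeq_imp (KBeq.kt φ) ((hΔ.2 φ).2 hK), fun hall => ?_⟩
  by_contra hnK
  obtain ⟨Δ, hsub, hΔ, hφ⟩ := exists_maximalConsistent_notMem
    fun h : Derives {χ | χ.K ∈ Γ} φ => hnK (hΓ.mem_iff_derives.2 h.K_of_setOf_K_mem)
  exact hφ (hall Δ (hΓ.mem_epistemicClass_of_subset hΔ hsub))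

theorem B_mem_congr (hΓ : MaximalConsistent Γ) (hΔ : Δ ∈ epistemicClass Γ) :
    φ.B ∈ Δ ↔ φ.B ∈ Γ := by
  constructor
  · contrapose
    intro hnB
    have hKnB : φ.B.neg.K ∈ Γ :=
      hΓ.mem_of_kbeq_imp (KBeq.an φ) ((hΓ.isTruthAssignment.neg_iff _).2 hnB)
    exact (hΔ.1.isTruthAssignment.neg_iff _).1 (hΓ.K_mem_iff.1 hKnB Δ hΔ)
  · exact fun hB => hΓ.K_mem_iff.1 (hΓ.mem_of_kbeq_imp (KBeq.ap φ) hB) Δ hΔ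

theorem B_mem_mono (hΓ : MaximalConsistent Γ) (h : ∀ Δ ∈ epistemicClass Γ, φ ∈ Δ → ψ ∈ Δ)
    (hB : φ.B ∈ Γ) : ψ.B ∈ Γ := by
  have hK : (φ.imp ψ).K ∈ Γ :=
    hΓ.K_mem_iff.2 fun Δ hΔ => (hΔ.1.isTruthAssignment.imp_iff φ ψ).2 (h Δ hΔ)
  exact (hΓ.isTruthAssignment.imp_iff _ _).1 (hΓ.mem_of_kbeq_imp (KBeq.kbm φ ψ) hK) hB

end MaximalConsistent

/-! ### Disjunctive normal forms -/

section NormalForm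

variable {A : Type}

/-- The set of atoms occurring in a formula. -/
noncomputable def Form.atoms : Form A → Finset A
  | .top => ∅
  | .atom p => {p}
  | .neg φ => φ.atoms
  | .and φ ψ => φ.atoms ∪ ψ.atoms
  | .K φ => φ.atoms
  | .B φ => φ.atoms

/-- The part of a truth assignment `P` that concerns the atoms in `s`, as the set of those that
are true. -/
noncomputable def trueAtoms (s : Finset A) (P : Form A → Prop) : Finset A :=
  {p ∈ s | P (.atom p)}

/-- The conjunction of literals over `s` saying that the true atoms are those in `T`. -/
noncomputable def literalConj (s T : Finset A) : Form A :=
  bigAnd (s.toList.map fun p => if p ∈ T then .atom p else .neg (.atom p))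

/-- The disjunctive normal form, over the atoms in `s`, saying that the set of true atoms belongs
to `𝒯`. -/
noncomputable def normalForm (s : Finset A) (𝒯 : Set (Finset A)) : Form A :=
  bigOr (({T ∈ s.powerset | T ∈ 𝒯} : Finset _).toList.map (literalConj s))

namespace IsTruthAssignment

variable {P : Form A → Prop} {s : Finset A}

theorem literalConj_iff (hP : IsTruthAssignment P) {T : Finset A} (hT : T ⊆ s) :
    P (literalConj s T) ↔ trueAtoms s P = T := by
  simp only [literalConj, hP.bigAnd_iff, List.forall_mem_map, Finset.mem_toList, hP.ite_neg_iff,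
    trueAtoms, Finset.ext_iff, Finset.mem_filter]
  exact forall_congr' fun p => by grind

theorem normalForm_iff (hP : IsTruthAssignment P) (𝒯 : Set (Finset A)) :
    P (normalForm s 𝒯) ↔ trueAtoms s P ∈ 𝒯 := by
  have hsub : trueAtoms s P ⊆ s := Finset.filter_subset _ _
  simp only [normalForm, hP.bigOr_map_iff, Finset.mem_toList, Finset.mem_filter,
    Finset.mem_powerset]
  constructor
  · rintro ⟨T, ⟨hTs, hT⟩, hPT⟩
    rwa [(hP.literalConj_iff hTs).1 hPT]
  · exact fun h => ⟨_, ⟨hsub, h⟩, (hP.literalConj_iff hsub).2 rfl⟩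

end IsTruthAssignment

end NormalForm

/-! ### The canonical model -/

section Canonical

variable {A : Type}

/-- The worlds of the canonical model: the members of the epistemic class of `Γ`, identified when
they contain the same atoms from `s`. -/
abbrev CanonicalWorld (s : Finset A) (Γ : Set (Form A)) : Type :=
  Set.range fun Δ : epistemicClass Γ => trueAtoms s (· ∈ Δ.1)

variable {s : Finset A} {Γ : Set (Form A)}

theorem finite_canonicalWorld : Finite (CanonicalWorld s Γ) :=
  s.powerset.finite_toSet.subset (Set.range_subset_iff.2 fun _ =>
    Finset.mem_coe.2 (Finset.mem_powerset.2 (Finset.filter_subset _ _)))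

/-- The canonical world that represents a member of the epistemic class of `Γ`. -/
noncomputable def toWorld (s : Finset A) (Δ : epistemicClass Γ) : CanonicalWorld s Γ :=
  Set.rangeFactorization _ Δ

theorem toWorld_surjective : Function.Surjective (toWorld s : epistemicClass Γ → _) :=
  Set.rangeFactorization_surjective

/-- The formula `φ` defines the set `X` of canonical worlds. The truth lemma says that every formula
over `s` defines its truth set. -/
def Defines (φ : Form A) (X : Set (CanonicalWorld s Γ)) : Prop :=
  ∀ Δ : epistemicClass Γ, φ ∈ Δ.1 ↔ toWorld s Δ ∈ X

namespace Defines

variable {φ ψ : Form A} {X Y : Set (CanonicalWorld s Γ)}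

theorem top : Defines Form.top (Set.univ : Set (CanonicalWorld s Γ)) :=
  fun Δ => iff_of_true Δ.2.1.isTruthAssignment.top trivial

theorem bot : Defines Form.bot (∅ : Set (CanonicalWorld s Γ)) :=
  fun Δ => iff_of_false Δ.2.1.isTruthAssignment.not_bot (Set.notMem_empty _)

theorem neg (hφ : Defines φ X) : Defines φ.neg Xᶜ :=
  fun Δ => (Δ.2.1.isTruthAssignment.neg_iff φ).trans (not_congr (hφ Δ))

theorem and (hφ : Defines φ X) (hψ : Defines ψ Y) : Defines (φ.and ψ) (X ∩ Y) :=
  fun Δ => (Δ.2.1.isTruthAssignment.and_iff φ ψ).trans (and_congr (hφ Δ) (hψ Δ))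

theorem or (hφ : Defines φ X) (hψ : Defines ψ Y) : Defines (φ.or ψ) (X ∪ Y) :=
  fun Δ => (Δ.2.1.isTruthAssignment.or_iff φ ψ).trans (or_congr (hφ Δ) (hψ Δ))

theorem K_mem_iff (hΓ : MaximalConsistent Γ) (hφ : Defines φ X) : φ.K ∈ Γ ↔ X = Set.univ := by
  rw [hΓ.K_mem_iff, Set.eq_univ_iff_forall, toWorld_surjective.forall, Subtype.forall]
  exact forall₂_congr fun Δ hΔ => hφ ⟨Δ, hΔ⟩

theorem B_mem_mono (hΓ : MaximalConsistent Γ) (hφ : Defines φ X) (hψ : Defines ψ Y) (hXY : X ⊆ Y)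
    (hB : φ.B ∈ Γ) : ψ.B ∈ Γ :=
  hΓ.B_mem_mono (fun Δ hΔ h => (hψ ⟨Δ, hΔ⟩).2 (hXY ((hφ ⟨Δ, hΔ⟩).1 h))) hB

end Defines

theorem exists_defines (X : Set (CanonicalWorld s Γ)) : ∃ φ, Defines φ X :=
  ⟨normalForm s (Subtype.val '' X), fun Δ =>
    (Δ.2.1.isTruthAssignment.normalForm_iff _).trans
      (Subtype.val_injective.mem_set_image (a := toWorld s Δ))⟩

/-- The neighborhoods of the canonical model: the sets defined by a formula believed in `Γ`. -/
def canonicalNbhds (s : Finset A) (Γ : Set (Form A)) : Set (Set (CanonicalWorld s Γ)) :=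
  {X | ∃ φ, Defines φ X ∧ φ.B ∈ Γ}

theorem Defines.B_mem_iff {φ : Form A} {X : Set (CanonicalWorld s Γ)} (hΓ : MaximalConsistent Γ)
    (hφ : Defines φ X) : φ.B ∈ Γ ↔ X ∈ canonicalNbhds s Γ := by
  refine ⟨fun hB => ⟨φ, hφ, hB⟩, ?_⟩
  rintro ⟨ψ, hψ, hB⟩
  exact hψ.B_mem_mono hΓ hφ subset_rfl hB

namespace MaximalConsistent

variable {X Y : Set (CanonicalWorld s Γ)}

theorem empty_notMem_canonicalNbhds (hΓ : MaximalConsistent Γ) : ∅ ∉ canonicalNbhds s Γ := by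
  rw [← Defines.bot.B_mem_iff hΓ]
  exact (hΓ.isTruthAssignment.neg_iff _).1 (hΓ.mem_of_kbeq KBeq.bf)

theorem univ_mem_canonicalNbhds (hΓ : MaximalConsistent Γ) : Set.univ ∈ canonicalNbhds s Γ :=
  ⟨_, Defines.top, hΓ.mem_of_kbeq KBeq.bn⟩

theorem canonicalNbhds_mono (hΓ : MaximalConsistent Γ) (hX : X ∈ canonicalNbhds s Γ)
    (hXY : X ⊆ Y) : Y ∈ canonicalNbhds s Γ := by
  obtain ⟨φ, hφ, hB⟩ := hX
  obtain ⟨ψ, hψ⟩ := exists_defines Y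
  exact ⟨ψ, hψ, hφ.B_mem_mono hΓ hψ hXY hB⟩

theorem compl_notMem_canonicalNbhds (hΓ : MaximalConsistent Γ) (hX : X ∈ canonicalNbhds s Γ) :
    Xᶜ ∉ canonicalNbhds s Γ := by
  obtain ⟨φ, hφ, hB⟩ := hX
  rw [← hφ.neg.B_mem_iff hΓ]
  exact (hΓ.isTruthAssignment.neg_iff _).1 (hΓ.mem_of_kbeq_imp (KBeq.dax φ) hB)

theorem mem_canonicalNbhds_of_ssubset (hΓ : MaximalConsistent Γ) (hX : Xᶜ ∉ canonicalNbhds s Γ)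
    (hXY : X ⊂ Y) : Y ∈ canonicalNbhds s Γ := by
  obtain ⟨φ, hφ⟩ := exists_defines X
  obtain ⟨ψ, hψ⟩ := exists_defines Y
  rw [← Set.union_eq_self_of_subset_left hXY.subset, ← (hφ.or hψ).B_mem_iff hΓ]
  refine hΓ.mem_of_kbeq_imp (KBeq.scax φ ψ) ?_
  have hΓP := hΓ.isTruthAssignment
  rw [hΓP.and_iff, hΓP.neg_iff, hΓP.neg_iff, hφ.neg.B_mem_iff hΓ, (hφ.neg.and hψ).neg.K_mem_iff hΓ,
    Set.compl_univ_iff, Set.inter_comm]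
  exact ⟨hX, (Set.nonempty_of_ssubset hXY).ne_empty⟩

theorem exists_mem_canonicalNbhds_of_card_le (hΓ : MaximalConsistent Γ) {m : ℕ}
    {X Y : Fin (m + 1) → Set (CanonicalWorld s Γ)}
    (hcard : ∀ w, (Finset.univ.filter fun i => w ∈ X i).card ≤
      (Finset.univ.filter fun i => w ∈ Y i).card)
    (hzero : X 0 ∈ canonicalNbhds s Γ) (hsucc : ∀ i : Fin m, (X i.succ)ᶜ ∉ canonicalNbhds s Γ) :
    ∃ j, Y j ∈ canonicalNbhds s Γ := by
  choose φ hφ using fun i => exists_defines (X i)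
  choose ψ hψ using fun i => exists_defines (Y i)
  have hΓP := hΓ.isTruthAssignment
  have hseg : segI φ ψ ∈ Γ := hΓ.K_mem_iff.2 fun Δ hΔ => by
    rw [hΔ.1.isTruthAssignment.bigOr_segF_iff]
    simpa only [hφ _ ⟨Δ, hΔ⟩, hψ _ ⟨Δ, hΔ⟩] using hcard (toWorld s ⟨Δ, hΔ⟩)
  have hdisj := hΓ.mem_of_kbeq_imp (KBeq.scott m φ ψ) <| by
    rw [hΓP.and_iff, hΓP.and_iff, hΓP.bigAnd_ofFn_iff]
    refine ⟨hseg, ((hφ 0).B_mem_iff hΓ).2 hzero, fun i => ?_⟩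
    rw [hΓP.neg_iff, (hφ i.succ).neg.B_mem_iff hΓ]
    exact hsucc i
  rw [hΓP.bigOr_ofFn_iff] at hdisj
  simpa only [(hψ _).B_mem_iff hΓ] using hdisj

end MaximalConsistent

/-- The canonical model of a maximal consistent set `Γ` over the atoms in `s`, with a single
equivalence class of worlds. -/
noncomputable def canonicalModel (s : Finset A) (hΓ : MaximalConsistent Γ) :
    MidENM (CanonicalWorld s Γ) A where
  finite := finite_canonicalWorld
  nonempty := ⟨toWorld s ⟨Γ, hΓ.self_mem_epistemicClass⟩⟩
  R _ _ := True
  equiv := ⟨fun _ => trivial, fun _ => trivial, fun _ _ => trivial⟩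
  V w := w.1
  N _ := canonicalNbhds s Γ
  kbc _ _ _ _ _ := trivial
  kbf _ := hΓ.empty_notMem_canonicalNbhds
  contains_class _ := hΓ.univ_mem_canonicalNbhds
  agreeN _ _ _ := rfl
  kbm _ _ hX _ hXY _ := hΓ.canonicalNbhds_mono hX hXY
  d _ X hX := by
    simpa only [Set.compl_eq_univ_sdiff, Set.ofPred_true] using hΓ.compl_notMem_canonicalNbhds hX
  sc _ X Y _ _ hX hXY :=
    hΓ.mem_canonicalNbhds_of_ssubset
      (by simpa only [Set.compl_eq_univ_sdiff, Set.ofPred_true] using hX) hXY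
  scott _ m X Y _ _ hcard hzero hsucc :=
    hΓ.exists_mem_canonicalNbhds_of_card_le hcard hzero fun i => by
      simpa only [Set.compl_eq_univ_sdiff, Set.ofPred_true] using hsucc i.succ i.succ_ne_zero

theorem defines_nsem_canonicalModel (hΓ : MaximalConsistent Γ) {φ : Form A} (hφ : φ.atoms ⊆ s) :
    Defines φ (nsem (canonicalModel s hΓ).toENM φ) := by
  have hcl : ∀ w, (canonicalModel s hΓ).cl w = Set.univ := fun _ => rfl
  induction φ with
  | top => exact Defines.top
  | atom p =>
    have hp : p ∈ s := hφ (Finset.mem_singleton_self p)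
    exact fun Δ => ⟨fun h => Finset.mem_filter.2 ⟨hp, h⟩, fun h => (Finset.mem_filter.1 h).2⟩
  | neg φ ih => exact (ih hφ).neg
  | and φ ψ ihφ ihψ =>
    exact (ihφ (Finset.union_subset_left hφ)).and (ihψ (Finset.union_subset_right hφ))
  | K φ ih =>
    intro Δ
    rw [Δ.2.2, (ih hφ).K_mem_iff hΓ]
    exact Set.univ_subset_iff.symm
  | B φ ih =>
    intro Δ
    rw [hΓ.B_mem_congr Δ.2, (ih hφ).B_mem_iff hΓ]
    simp only [nsem, hcl, Set.univ_inter]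
    rfl

end Canonical

theorem KBeq.complete {A : Type} {φ : Form A}
    (hvalid : ∀ (W : Type) (M : MidENM W A) (w : W), w ∈ nsem M.toENM φ) : KBeq φ := by
  by_contra hφ
  obtain ⟨Γ, -, hΓ, hφΓ⟩ := exists_maximalConsistent_notMem fun h : Derives ∅ φ => hφ h.kbeq
  exact hφΓ ((defines_nsem_canonicalModel hΓ subset_rfl ⟨Γ, hΓ.self_mem_epistemicClass⟩).2
    (hvalid _ (canonicalModel φ.atoms hΓ) _))

/-- `KBeq` is sound and complete with respect to the class of mid-threshold epistemic
neighborhood models. -/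
theorem KBeq_neighborhood_soundness_completeness {A : Type} (φ : Form A) :
    KBeq φ ↔ ∀ (W : Type) (M : MidENM W A) (w : W), w ∈ nsem M.toENM φ :=
  ⟨fun h _ M w => h.sound M w, KBeq.complete⟩
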